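/- Let I ⊂ ℝ be an interval and let p, a, b : I → ℂ be C¹ functions with |p(t)| < 1 for all t ∈ I that solve the reduced resonant system of the four-dimensional Schrödinger–Newton–Hooke equation. Then the four quantities N(t) = (1+y)²(2(1+y)(1+3y)|a|² + |b|² + 4(1+y)·Re(conj(a)·b·p)), J(t) = (1+y)²(2(1+y)(1+9y+12y²)|a|² + 2y|b|² + 4(1+y)(1+3y)·Re(conj(a)·b·p)), S(t) = |a|²(1+y)⁴/2, and Z(t) = 2(1+y)³(6(1+y)(1+2y)|a|² + |b|² + 6(1+y)·Re(conj(a)·b·p))·conj(p) + 2(1+y)³·conj(a)·b, where y = |p|²/(1−|p|²), are all constant on I (N, J, S are real constants and Z is a complex constant). -/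

import Mathlib

open Set

/-- `y = |p|²/(1-|p|²)`. -/
noncomputable def yv (p : ℝ → ℂ) (t : ℝ) : ℝ := ‖p t‖^2 / (1 - ‖p t‖^2)

/-- `y` as a complex number. -/
noncomputable def Yc (p : ℝ → ℂ) (t : ℝ) : ℂ := ((yv p t : ℝ) : ℂ)

/-- `(p, a, b)` (with derivatives `(pd, ad, bd)`) is a `C¹` solution on `I` of the
reduced resonant system of the four-dimensional Schrödinger–Newton–Hooke equation. -/
def RRS (I : Set ℝ) (p a b pd ad bd : ℝ → ℂ) : Prop :=
  (∀ t ∈ I, HasDerivAt p (pd t) t) ∧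
  (∀ t ∈ I, HasDerivAt a (ad t) t) ∧
  (∀ t ∈ I, HasDerivAt b (bd t) t) ∧
  ContinuousOn pd I ∧ ContinuousOn ad I ∧ ContinuousOn bd I ∧
  (∀ t ∈ I,
    Complex.I * pd t =
      (1/16) * (1 + Yc p t)^2 *
        (2 * ((‖a t‖^2 : ℝ) : ℂ) * p t * (1 + Yc p t) + a t * starRingEnd ℂ (b t)) ∧
    Complex.I * ad t =
      (1/16) * a t * (1 + Yc p t)^3 *
        (10 * ((‖a t‖^2 : ℝ) : ℂ) * (1 + 3 * Yc p t)
          + 20 * (((a t * starRingEnd ℂ (b t) * starRingEnd ℂ (p t)).re : ℝ) : ℂ)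
          + 4 * starRingEnd ℂ (a t) * b t * p t)
        + (7/16) * a t * (1 + Yc p t)^2 * ((‖b t‖^2 : ℝ) : ℂ) ∧
    Complex.I * bd t =
      (3/8) * a t * starRingEnd ℂ (p t) * (1 + Yc p t)^4 *
        (2 * (1 + 2 * Yc p t) * ((‖a t‖^2 : ℝ) : ℂ)
          + a t * starRingEnd ℂ (b t) * starRingEnd ℂ (p t))
        + b t * (1 + Yc p t)^2 *
          ((1 + Yc p t) * (1 + 3 * Yc p t) * ((‖a t‖^2 : ℝ) : ℂ)
            + ((‖b t‖^2 : ℝ) : ℂ) / 2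
            + 2 * (1 + Yc p t) * (((starRingEnd ℂ (a t) * b t * p t).re : ℝ) : ℂ)))

/-- The mass `N`. -/
noncomputable def Nval (p a b : ℝ → ℂ) (t : ℝ) : ℝ :=
  (1 + yv p t)^2 * (2 * (1 + yv p t) * (1 + 3 * yv p t) * ‖a t‖^2 + ‖b t‖^2
    + 4 * (1 + yv p t) * (starRingEnd ℂ (a t) * b t * p t).re)

/-- The linear energy `J`. -/
noncomputable def Jval (p a b : ℝ → ℂ) (t : ℝ) : ℝ :=
  (1 + yv p t)^2 * (2 * (1 + yv p t) * (1 + 9 * yv p t + 12 * (yv p t)^2) * ‖a t‖^2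
    + 2 * yv p t * ‖b t‖^2
    + 4 * (1 + yv p t) * (1 + 3 * yv p t) * (starRingEnd ℂ (a t) * b t * p t).re)

/-- The quantity `S = |a|²(1+y)⁴/2` encoding the Hamiltonian via `H = N² - 6S²`. -/
noncomputable def Sval (p a : ℝ → ℂ) (t : ℝ) : ℝ := ‖a t‖^2 * (1 + yv p t)^4 / 2

/-- The complex integral of motion `Z`, special to `d = 4`. -/
noncomputable def Zval (p a b : ℝ → ℂ) (t : ℝ) : ℂ :=
  2 * (((1 + yv p t : ℝ)) : ℂ)^3 *
      (((6 * (1 + yv p t) * (1 + 2 * yv p t) * ‖a t‖^2 + ‖b t‖^2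
        + 6 * (1 + yv p t) * (starRingEnd ℂ (a t) * b t * p t).re : ℝ)) : ℂ) *
      starRingEnd ℂ (p t)
    + 2 * (((1 + yv p t : ℝ)) : ℂ)^3 * starRingEnd ℂ (a t) * b t

/-- The reduced resonant system with the conjugates of `p`, `a`, `b` replaced by independent
functions `q`, `c`, `d`, and with `u = 1 + y`. -/
structure PolarizedRRSAt (p q a c b d u : ℝ → ℂ) (t : ℝ) : Prop where
  mul_eq_one : u t * (1 - p t * q t) = 1
  hasDerivAt_p : HasDerivAt p (-Complex.I * (1/16 * u t ^ 2 *
    (2 * (a t * c t) * p t * u t + a t * d t))) t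
  hasDerivAt_q : HasDerivAt q (Complex.I * (1/16 * u t ^ 2 *
    (2 * (a t * c t) * q t * u t + c t * b t))) t
  hasDerivAt_a : HasDerivAt a (-Complex.I * (1/16 * a t * u t ^ 3 *
    (10 * (a t * c t) * (3 * u t - 2) + 10 * (a t * d t * q t + c t * b t * p t)
      + 4 * c t * b t * p t) + 7/16 * a t * u t ^ 2 * (b t * d t))) t
  hasDerivAt_c : HasDerivAt c (Complex.I * (1/16 * c t * u t ^ 3 *
    (10 * (a t * c t) * (3 * u t - 2) + 10 * (a t * d t * q t + c t * b t * p t)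
      + 4 * a t * d t * q t) + 7/16 * c t * u t ^ 2 * (b t * d t))) t
  hasDerivAt_b : HasDerivAt b (-Complex.I * (3/8 * a t * q t * u t ^ 4 *
    (2 * (2 * u t - 1) * (a t * c t) + a t * d t * q t)
      + b t * u t ^ 2 * (u t * (3 * u t - 2) * (a t * c t) + b t * d t / 2
        + u t * (c t * b t * p t + a t * d t * q t)))) t
  hasDerivAt_d : HasDerivAt d (Complex.I * (3/8 * c t * p t * u t ^ 4 *
    (2 * (2 * u t - 1) * (a t * c t) + c t * b t * p t)
      + d t * u t ^ 2 * (u t * (3 * u t - 2) * (a t * c t) + b t * d t / 2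
        + u t * (c t * b t * p t + a t * d t * q t)))) t
  hasDerivAt_u : HasDerivAt u (Complex.I * (1/16 * u t ^ 4 *
    (c t * b t * p t - a t * d t * q t))) t

namespace PolarizedRRSAt

variable {p q a c b d u : ℝ → ℂ} {t : ℝ}

theorem hasDerivAt_mass (h : PolarizedRRSAt p q a c b d u t) :
    HasDerivAt (fun s => u s ^ 2 * (2 * u s * (3 * u s - 2) * (a s * c s) + b s * d s
      + 2 * u s * (c s * b s * p s + a s * d s * q s))) 0 t := by
  obtain ⟨hu, hp', hq', ha', hc', hb', hd', hu'⟩ := h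
  have key := (hu'.fun_pow 2).fun_mul (((((hu'.const_mul 2).fun_mul
    ((hu'.const_mul 3).sub_const 2)).fun_mul (ha'.fun_mul hc')).fun_add (hb'.fun_mul hd')).fun_add
    ((hu'.const_mul 2).fun_mul (((hc'.fun_mul hb').fun_mul hp').fun_add
      ((ha'.fun_mul hd').fun_mul hq'))))
  refine key.congr_deriv ?_
  clear * - hu
  simp only [Nat.reduceSub, Nat.cast_ofNat, eq_inv_of_mul_eq_one_left hu]
  have := right_ne_zero_of_mul_eq_one hu
  field_simp
  ring

theorem hasDerivAt_energy (h : PolarizedRRSAt p q a c b d u t) :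
    HasDerivAt (fun s => u s ^ 2 * (2 * u s * (12 * u s ^ 2 - 15 * u s + 4) * (a s * c s)
      + 2 * (u s - 1) * (b s * d s)
      + 2 * u s * (3 * u s - 2) * (c s * b s * p s + a s * d s * q s))) 0 t := by
  obtain ⟨hu, hp', hq', ha', hc', hb', hd', hu'⟩ := h
  have key := (hu'.fun_pow 2).fun_mul (((((hu'.const_mul 2).fun_mul
    ((((hu'.fun_pow 2).const_mul 12).fun_sub (hu'.const_mul 15)).add_const 4)).fun_mul
      (ha'.fun_mul hc')).fun_add (((hu'.sub_const 1).const_mul 2).fun_mul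
        (hb'.fun_mul hd'))).fun_add
    (((hu'.const_mul 2).fun_mul ((hu'.const_mul 3).sub_const 2)).fun_mul
      (((hc'.fun_mul hb').fun_mul hp').fun_add ((ha'.fun_mul hd').fun_mul hq'))))
  refine key.congr_deriv ?_
  clear * - hu
  simp only [Nat.reduceSub, Nat.cast_ofNat, eq_inv_of_mul_eq_one_left hu]
  have := right_ne_zero_of_mul_eq_one hu
  field_simp
  ring

theorem hasDerivAt_S (h : PolarizedRRSAt p q a c b d u t) :
    HasDerivAt (fun s => a s * c s * u s ^ 4 / 2) 0 t := by
  obtain ⟨hu, hp', hq', ha', hc', hb', hd', hu'⟩ := h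
  refine (((ha'.fun_mul hc').fun_mul (hu'.fun_pow 4)).div_const 2).congr_deriv ?_
  clear * - hu
  simp only [Nat.reduceSub, Nat.cast_ofNat, eq_inv_of_mul_eq_one_left hu]
  have := right_ne_zero_of_mul_eq_one hu
  field_simp
  ring

theorem hasDerivAt_Z (h : PolarizedRRSAt p q a c b d u t) :
    HasDerivAt (fun s => 2 * u s ^ 3 * (6 * u s * (2 * u s - 1) * (a s * c s) + b s * d s
      + 3 * u s * (c s * b s * p s + a s * d s * q s)) * q s + 2 * u s ^ 3 * c s * b s) 0 t := by
  obtain ⟨hu, hp', hq', ha', hc', hb', hd', hu'⟩ := h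
  have key := ((((hu'.fun_pow 3).const_mul 2).fun_mul (((((hu'.const_mul 6).fun_mul
    ((hu'.const_mul 2).sub_const 1)).fun_mul (ha'.fun_mul hc')).fun_add
      (hb'.fun_mul hd')).fun_add ((hu'.const_mul 3).fun_mul
        (((hc'.fun_mul hb').fun_mul hp').fun_add ((ha'.fun_mul hd').fun_mul hq'))))).fun_mul
    hq').fun_add ((((hu'.fun_pow 3).const_mul 2).fun_mul hc').fun_mul hb')
  refine key.congr_deriv ?_
  clear * - hu
  simp only [Nat.reduceSub, Nat.cast_ofNat, eq_inv_of_mul_eq_one_left hu]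
  have := right_ne_zero_of_mul_eq_one hu
  field_simp
  ring

end PolarizedRRSAt

theorem ofReal_norm_sq (z : ℂ) : ((‖z‖ ^ 2 : ℝ) : ℂ) = z * starRingEnd ℂ z := by
  rw [Complex.mul_conj, Complex.normSq_eq_norm_sq]

theorem one_sub_mul_conj_ne_zero {z : ℂ} (hz : ‖z‖ < 1) : 1 - z * starRingEnd ℂ z ≠ 0 := by
  rw [← ofReal_norm_sq, ← Complex.ofReal_one, ← Complex.ofReal_sub, Complex.ofReal_ne_zero]
  nlinarith [norm_nonneg z]

theorem ofReal_yv {p : ℝ → ℂ} {t : ℝ} (hp : ‖p t‖ < 1) :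
    (yv p t : ℂ) = (1 - p t * starRingEnd ℂ (p t))⁻¹ - 1 := by
  have h := one_sub_mul_conj_ne_zero hp
  rw [yv, Complex.ofReal_div, Complex.ofReal_sub, ofReal_norm_sq, Complex.ofReal_one]
  field_simp
  ring

theorem RRS.polarizedRRSAt {I : Set ℝ} {p a b pd ad bd : ℝ → ℂ} (h : RRS I p a b pd ad bd)
    {t : ℝ} (ht : t ∈ I) (hp : ‖p t‖ < 1) :
    PolarizedRRSAt p (fun s => starRingEnd ℂ (p s)) a (fun s => starRingEnd ℂ (a s))
      b (fun s => starRingEnd ℂ (b s)) (fun s => (1 - p s * starRingEnd ℂ (p s))⁻¹) t := by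
  obtain ⟨hpd, had, hbd, -, -, -, heq⟩ := h
  obtain ⟨ep, ea, eb⟩ := heq t ht
  have hne := one_sub_mul_conj_ne_zero hp
  have hu : starRingEnd ℂ (1 - p t * starRingEnd ℂ (p t))⁻¹
      = (1 - p t * starRingEnd ℂ (p t))⁻¹ := by
    simp [mul_comm]
  have solve {x w : ℂ} (hx : Complex.I * x = w) : x = -Complex.I * w := by
    rw [← hx, ← mul_assoc, neg_mul, Complex.I_mul_I, neg_neg, one_mul]
  simp only [Yc, ofReal_yv hp, ofReal_norm_sq, Complex.re_eq_add_conj, map_mul,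
    Complex.conj_conj] at ep ea eb
  have hp' := (hpd t ht).congr_deriv (solve ep)
  have ha' := (had t ht).congr_deriv (solve ea)
  have hb' := (hbd t ht).congr_deriv (solve eb)
  have hq' := hp'.star
  have hc' := ha'.star
  have hd' := hb'.star
  have hu' := ((hp'.fun_mul hq').const_sub 1).fun_inv hne
  simp only [← starRingEnd_apply, map_mul, map_add, map_sub, map_neg, map_pow, map_div₀, map_one,
    map_ofNat, Complex.conj_I, Complex.conj_conj, hu] at hq' hc' hd' hu'
  refine ⟨inv_mul_cancel₀ hne, hp'.congr_deriv ?_, hq'.congr_deriv ?_, ha'.congr_deriv ?_,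
    hc'.congr_deriv ?_, hb'.congr_deriv ?_, hd'.congr_deriv ?_, hu'.congr_deriv ?_⟩
  · ring
  · ring
  · ring
  · ring
  · ring
  · ring
  · field_simp
    ring

/-- A function with vanishing derivative on an order-connected set is constant there. -/
theorem eq_of_hasDerivAt_zero {I : Set ℝ} (hI : I.OrdConnected) {f : ℝ → ℂ}
    (hf : ∀ t ∈ I, HasDerivAt f 0 t) {t₁ t₂ : ℝ} (h₁ : t₁ ∈ I) (h₂ : t₂ ∈ I) :
    f t₁ = f t₂ := by
  have h := hI.convex.norm_image_sub_le_of_norm_hasDerivWithin_le (C := 0)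
    (fun t ht => (hf t ht).hasDerivWithinAt) (by simp) h₁ h₂
  rw [zero_mul, norm_le_zero_iff, sub_eq_zero] at h
  exact h.symm

/-- The quantities `N`, `J`, `S`, `Z` are conserved along solutions of the reduced
resonant system of the four-dimensional Schrödinger–Newton–Hooke equation. -/
theorem stmt18 (I : Set ℝ) (hI : I.OrdConnected)
    (p a b pd ad bd : ℝ → ℂ)
    (hp1 : ∀ t ∈ I, ‖p t‖ < 1)
    (hsys : RRS I p a b pd ad bd) :
    ∀ t₁ ∈ I, ∀ t₂ ∈ I,
      Nval p a b t₁ = Nval p a b t₂ ∧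
      Jval p a b t₁ = Jval p a b t₂ ∧
      Sval p a t₁ = Sval p a t₂ ∧
      Zval p a b t₁ = Zval p a b t₂ := by
  intro t₁ h₁ t₂ h₂
  have hP t (ht : t ∈ I) := hsys.polarizedRRSAt ht (hp1 t ht)
  have hN := eq_of_hasDerivAt_zero hI (fun t ht => (hP t ht).hasDerivAt_mass) h₁ h₂
  have hJ := eq_of_hasDerivAt_zero hI (fun t ht => (hP t ht).hasDerivAt_energy) h₁ h₂
  have hS := eq_of_hasDerivAt_zero hI (fun t ht => (hP t ht).hasDerivAt_S) h₁ h₂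
  have hZ := eq_of_hasDerivAt_zero hI (fun t ht => (hP t ht).hasDerivAt_Z) h₁ h₂
  have hy₁ := ofReal_yv (hp1 t₁ h₁)
  have hy₂ := ofReal_yv (hp1 t₂ h₂)
  refine ⟨Complex.ofReal_injective ?_, Complex.ofReal_injective ?_,
    Complex.ofReal_injective ?_, ?_⟩
  · convert hN using 1 <;>
    · simp only [Nval, Complex.ofReal_mul, Complex.ofReal_add, Complex.ofReal_pow,
        Complex.ofReal_one, Complex.ofReal_ofNat, ← Complex.mul_conj', Complex.re_eq_add_conj,
        map_mul, Complex.conj_conj, hy₁, hy₂]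
      ring
  · convert hJ using 1 <;>
    · simp only [Jval, Complex.ofReal_mul, Complex.ofReal_add, Complex.ofReal_pow,
        Complex.ofReal_one, Complex.ofReal_ofNat, ← Complex.mul_conj', Complex.re_eq_add_conj,
        map_mul, Complex.conj_conj, hy₁, hy₂]
      ring
  · convert hS using 1 <;>
    · simp only [Sval, Complex.ofReal_mul, Complex.ofReal_add, Complex.ofReal_pow,
        Complex.ofReal_div, Complex.ofReal_one, Complex.ofReal_ofNat, ← Complex.mul_conj', hy₁, hy₂]
      ring
  · convert hZ using 1 <;>
    · simp only [Zval, Complex.ofReal_mul, Complex.ofReal_add, Complex.ofReal_pow,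
        Complex.ofReal_one, Complex.ofReal_ofNat, ← Complex.mul_conj', Complex.re_eq_add_conj,
        map_mul, Complex.conj_conj, hy₁, hy₂]
      ring
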